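/- arXiv:2203.15378 — 2 statements merged into one kernel-verified Lean document; each statement's English description precedes it below -/
import Mathlib

section
/- Let R(n) denote the number of 2-colored Rogers-Ramanujan partitions of n. Then ∑_{n≥0} R(n) q^n = [∏_{k≥1} (1+q^k)/(1-q^k)] · ∏_{k≥0} (1-q^{4k+2})^2 (1-q^{4k+4}). -/
/-- A valid single-color part set of a 2-colored Rogers-Ramanujan partition:
all parts positive and any two distinct parts differ by at least 2. -/
def IsRRColor (A : Finset ℕ) : Prop :=
  (∀ a ∈ A, 1 ≤ a) ∧ ∀ a ∈ A, ∀ b ∈ A, a ≠ b → 2 ≤ max a b - min a b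

/-- A 2-colored Rogers-Ramanujan partition: a pair of part sets (black, red),
each a valid color class, with no common part. -/
def TwoColoredRR (p : Finset ℕ × Finset ℕ) : Prop :=
  IsRRColor p.1 ∧ IsRRColor p.2 ∧ Disjoint p.1 p.2

/-- `R n`: the number of 2-colored Rogers-Ramanujan partitions of `n`. -/
noncomputable def Rcount (n : ℕ) : ℕ :=
  Nat.card {p : Finset ℕ × Finset ℕ // TwoColoredRR p ∧ p.1.sum id + p.2.sum id = n}


/-- Summands of the (two-parameter) Lebesgue series. -/
noncomputable def lebC (q b x : ℂ) : ℕ → ℂ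
  | 0 => 1
  | m + 1 => lebC q b x m * (x * q ^ (m + 1) * (1 + b * q ^ m) / (1 - q ^ (m + 1)))

/-- A majorant of the Lebesgue summands. -/
noncomputable def lebM (r : ℝ) : ℕ → ℝ
  | 0 => 1
  | m + 1 => lebM r m * (r ^ (m + 1) * (1 + r ^ m) / (1 - r ^ (m + 1)))

lemma leb_one_sub_ne {q : ℂ} (hq : ‖q‖ < 1) (m : ℕ) : 1 - q ^ (m + 1) ≠ 0 := by
  intro h
  have h1 : q ^ (m + 1) = 1 := (sub_eq_zero.mp h).symm
  have h2 : ‖q‖ ^ (m + 1) = 1 := by rw [← norm_pow, h1, norm_one]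
  have h3 : ‖q‖ ^ (m + 1) < 1 := pow_lt_one₀ (norm_nonneg _) hq (Nat.succ_ne_zero _)
  linarith

lemma lebM_factor_nonneg {r : ℝ} (h0 : 0 ≤ r) (h1 : r < 1) (m : ℕ) :
    0 ≤ r ^ (m + 1) * (1 + r ^ m) / (1 - r ^ (m + 1)) := by
  have h3 : r ^ (m + 1) < 1 := pow_lt_one₀ h0 h1 (Nat.succ_ne_zero _)
  apply div_nonneg (by positivity) (by linarith)

lemma lebM_nonneg {r : ℝ} (h0 : 0 ≤ r) (h1 : r < 1) (m : ℕ) : 0 ≤ lebM r m := by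
  induction m with
  | zero => simp [lebM]
  | succ m ih => exact mul_nonneg ih (lebM_factor_nonneg h0 h1 m)

open Filter Topology in
lemma lebM_summable {r : ℝ} (h0 : 0 ≤ r) (h1 : r < 1) : Summable (lebM r) := by
  have hp : Tendsto (fun m : ℕ => r ^ m) atTop (𝓝 0) := tendsto_pow_atTop_nhds_zero_of_lt_one h0 h1
  have hp1 : Tendsto (fun m : ℕ => r ^ (m + 1)) atTop (𝓝 0) := (tendsto_add_atTop_iff_nat 1).2 hp
  have ht : Tendsto (fun m : ℕ => r ^ (m + 1) * (1 + r ^ m) / (1 - r ^ (m + 1))) atTop (𝓝 0) := by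
    have := (hp1.mul (hp.const_add 1)).div (hp1.const_sub 1) (by norm_num)
    simp only [zero_mul, zero_div] at this
    exact this
  refine summable_of_ratio_norm_eventually_le (r := 1 / 2) (by norm_num) ?_
  filter_upwards [ht.eventually_lt_const (show (0 : ℝ) < 1 / 2 by norm_num)] with m hm
  rw [Real.norm_of_nonneg (lebM_nonneg h0 h1 _), Real.norm_of_nonneg (lebM_nonneg h0 h1 _)]
  have := mul_le_mul_of_nonneg_left hm.le (lebM_nonneg h0 h1 m)
  rw [lebM]
  linarith

lemma lebC_le {q b x : ℂ} (hq : ‖q‖ < 1) (hb : ‖b‖ ≤ 1) (hx : ‖x‖ ≤ 1) (m : ℕ) :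
    ‖lebC q b x m‖ ≤ lebM ‖q‖ m := by
  induction m with
  | zero => simp [lebC, lebM]
  | succ m ih =>
    rw [lebC, lebM, norm_mul]
    refine mul_le_mul ih ?_ (norm_nonneg _) (lebM_nonneg (norm_nonneg _) hq _)
    rw [norm_div, norm_mul, norm_mul, norm_pow]
    have h3 : ‖q‖ ^ (m + 1) < 1 := pow_lt_one₀ (norm_nonneg _) hq (Nat.succ_ne_zero _)
    have h4 : 1 - ‖q‖ ^ (m + 1) ≤ ‖1 - q ^ (m + 1)‖ := by
      have := norm_sub_norm_le (1 : ℂ) (q ^ (m + 1))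
      simpa using this
    have h5 : ‖1 + b * q ^ m‖ ≤ 1 + ‖q‖ ^ m := by
      refine (norm_add_le _ _).trans ?_
      rw [norm_one, norm_mul, norm_pow]
      have : ‖b‖ * ‖q‖ ^ m ≤ 1 * ‖q‖ ^ m := by gcongr
      linarith
    have h6 : ‖x‖ * ‖q‖ ^ (m + 1) ≤ ‖q‖ ^ (m + 1) := by
      have : ‖x‖ * ‖q‖ ^ (m + 1) ≤ 1 * ‖q‖ ^ (m + 1) := by gcongr
      linarith
    apply div_le_div₀ (by positivity) _ (by linarith) h4
    gcongr

lemma lebC_summable {q b x : ℂ} (hq : ‖q‖ < 1) (hb : ‖b‖ ≤ 1) (hx : ‖x‖ ≤ 1) :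
    Summable (lebC q b x) :=
  Summable.of_norm_bounded (lebM_summable (norm_nonneg _) hq) (lebC_le hq hb hx)

/-- The Lebesgue series. -/
noncomputable def lebS (q b x : ℂ) : ℂ := ∑' m, lebC q b x m

open Filter Topology in
lemma lebC_tendsto {q : ℂ} {b x : ℕ → ℂ} {b0 x0 : ℂ} (hb : Tendsto b atTop (𝓝 b0))
    (hx : Tendsto x atTop (𝓝 x0)) (m : ℕ) :
    Tendsto (fun n => lebC q (b n) (x n) m) atTop (𝓝 (lebC q b0 x0 m)) := by
  induction m with
  | zero => simp [lebC]
  | succ m ih =>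
    simp only [lebC]
    exact ih.mul (((hx.mul_const _).mul ((hb.mul_const _).const_add 1)).div_const _)

open Filter Topology in
lemma lebS_tendsto {q : ℂ} (hq : ‖q‖ < 1) {b x : ℕ → ℂ} {b0 x0 : ℂ} (hb : Tendsto b atTop (𝓝 b0))
    (hx : Tendsto x atTop (𝓝 x0)) (hb1 : ∀ n, ‖b n‖ ≤ 1) (hx1 : ∀ n, ‖x n‖ ≤ 1) :
    Tendsto (fun n => lebS q (b n) (x n)) atTop (𝓝 (lebS q b0 x0)) := by
  refine tendsto_tsum_of_dominated_convergence (lebM_summable (norm_nonneg _) hq)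
    (fun m => lebC_tendsto hb hx m) (Eventually.of_forall fun n m => lebC_le hq (hb1 n) (hx1 n) m)

lemma lebC_x_zero (q b : ℂ) (m : ℕ) : lebC q b 0 (m + 1) = 0 := by simp [lebC]

lemma lebS_x_zero {q b : ℂ} : lebS q b 0 = 1 := by
  rw [lebS, tsum_eq_single 0]
  · rfl
  · intro m hm
    obtain ⟨k, rfl⟩ := Nat.exists_eq_succ_of_ne_zero hm
    exact lebC_x_zero q b k

lemma lebC_scale (q b x y : ℂ) (m : ℕ) : lebC q b (x * y) m = y ^ m * lebC q b x m := by
  induction m with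
  | zero => simp [lebC]
  | succ m ih => rw [lebC, lebC, ih]; ring

lemma lebC_shift (q b x : ℂ) (m : ℕ) :
    lebC q (b * q) x m * (1 + b) = lebC q b x m * (1 + b * q ^ m) := by
  induction m with
  | zero => simp [lebC]
  | succ m ih =>
    rw [lebC, lebC]
    linear_combination (x * q ^ (m + 1) * (1 + b * q * q ^ m) / (1 - q ^ (m + 1))) * ih

lemma lebC_succ_mul {q b x : ℂ} (hq : ‖q‖ < 1) (m : ℕ) :
    lebC q b x (m + 1) * (1 - q ^ (m + 1)) = lebC q b x m * (x * q ^ (m + 1) * (1 + b * q ^ m)) := by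
  have := leb_one_sub_ne hq m
  rw [lebC]
  field_simp

/-- Functional equation in `x`. -/
lemma lebS_x {q b x : ℂ} (hq : ‖q‖ < 1) (hb : ‖b‖ ≤ 1) (hx : ‖x‖ ≤ 1) :
    lebS q b x = (1 + x * q) * lebS q b (x * q) + b * (x * q) * lebS q b (x * q * q) := by
  have hx1 : ‖x * q‖ ≤ 1 := by
    rw [norm_mul]; exact mul_le_one₀ hx (norm_nonneg _) hq.le
  have hx2 : ‖x * q * q‖ ≤ 1 := by
    rw [norm_mul]; exact mul_le_one₀ hx1 (norm_nonneg _) hq.le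
  have s0 := lebC_summable hq hb hx
  have s1 := lebC_summable hq hb hx1
  have s2 := lebC_summable hq hb hx2
  have e : ∀ m, lebC q b x (m + 1) = lebC q b (x * q) (m + 1) +
      ((x * q) * lebC q b (x * q) m + b * (x * q) * lebC q b (x * q * q) m) := by
    intro m
    have := lebC_succ_mul (b := b) (x := x) hq m
    simp only [lebC_scale]
    linear_combination this
  unfold lebS
  rw [s0.tsum_eq_zero_add]
  simp only [e]
  rw [((summable_nat_add_iff 1).2 s1).tsum_add ((s1.mul_left _).add (s2.mul_left _)),
    (s1.mul_left _).tsum_add (s2.mul_left _), tsum_mul_left, tsum_mul_left]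
  have h := s1.tsum_eq_zero_add
  simp only [lebC] at h ⊢
  linear_combination -h

/-- Functional equation in `b`. -/
lemma lebS_b {q b : ℂ} (hq : ‖q‖ < 1) (hb : ‖b‖ ≤ 1) :
    lebS q b 1 = (1 + b * q) * lebS q (b * q * q) 1 := by
  have hb1 : ‖b * q‖ ≤ 1 := by
    rw [norm_mul]; exact mul_le_one₀ hb (norm_nonneg _) hq.le
  have hb2 : ‖b * q * q‖ ≤ 1 := by
    rw [norm_mul]; exact mul_le_one₀ hb1 (norm_nonneg _) hq.le
  have h1 : ‖(1 : ℂ)‖ ≤ 1 := by simp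
  have s0 := lebC_summable hq hb h1
  have s2 := lebC_summable hq hb2 h1
  have sd := lebC_summable hq hb1 (x := 1 * q) (by simpa using hq.le)
  have e : ∀ m, lebC q b 1 (m + 1) = (1 + b * q) * lebC q (b * q * q) 1 (m + 1) +
      (b * q * lebC q (b * q) (1 * q) m - b * q * lebC q (b * q) (1 * q) (m + 1)) := by
    intro m
    have hne := leb_one_sub_ne hq m
    have a1 := lebC_succ_mul (b := b) (x := 1) hq m
    have a2 := lebC_shift q b 1 m
    have a3 := lebC_shift q (b * q) 1 (m + 1)
    have a4 := lebC_succ_mul (b := b * q) (x := 1) hq m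
    simp only [lebC_scale]
    apply mul_right_cancel₀ hne
    linear_combination a1 - q ^ (m + 1) * a2 - (1 - q ^ (m + 1)) * a3
      + (b * q * q ^ (m + 1) - (1 + b * q * q ^ (m + 1))) * a4
  unfold lebS
  rw [s0.tsum_eq_zero_add]
  simp only [e]
  have sd1 := (summable_nat_add_iff 1).2 sd
  rw [(((summable_nat_add_iff 1).2 s2).mul_left _).tsum_add ((sd.mul_left _).sub (sd1.mul_left _)),
    (sd.mul_left _).tsum_sub (sd1.mul_left _), tsum_mul_left, tsum_mul_left, tsum_mul_left]
  have h := s2.tsum_eq_zero_add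
  have h' := sd.tsum_eq_zero_add
  simp only [lebC] at h h' ⊢
  linear_combination -(1 + b * q) * h + b * q * h'

lemma leb_pow_le {q : ℂ} (hq : ‖q‖ < 1) (n : ℕ) : ‖q ^ n‖ ≤ 1 := by
  rw [norm_pow]; exact pow_le_one₀ (norm_nonneg _) hq.le

lemma leb_mult {q : ℂ} (hq : ‖q‖ < 1) (ε : ℂ) (a b : ℕ) (ha : 1 ≤ a) :
    Multipliable (fun k : ℕ => 1 + ε * q ^ (a * k + b)) := by
  apply multipliable_one_add_of_summable
  have h : ‖q‖ ^ a < 1 := pow_lt_one₀ (norm_nonneg _) hq (by omega)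
  have := ((summable_geometric_of_lt_one (by positivity) h).mul_left (‖ε‖ * ‖q‖ ^ b))
  refine this.congr fun k => ?_
  rw [norm_mul, norm_pow, pow_add, pow_mul]; ring

open Filter Topology in
lemma leb_pow_tendsto {q : ℂ} (hq : ‖q‖ < 1) : Tendsto (fun n : ℕ => q ^ n) atTop (𝓝 0) :=
  tendsto_pow_atTop_nhds_zero_of_norm_lt_one hq

open Filter Topology in
lemma leb_euler {q : ℂ} (hq : ‖q‖ < 1) : lebS q 0 1 = ∏' k : ℕ, (1 + 1 * q ^ (1 * k + 1)) := by
  have h : ∀ n : ℕ, lebS q 0 1 =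
      (∏ k ∈ Finset.range n, (1 + 1 * q ^ (1 * k + 1))) * lebS q 0 (q ^ n) := by
    intro n
    induction n with
    | zero => simp
    | succ n ih =>
      rw [ih, Finset.prod_range_succ, lebS_x hq (by simp) (leb_pow_le hq n), ← pow_succ]
      ring
  have t := (leb_mult hq 1 1 1 le_rfl).tendsto_prod_tprod_nat.mul
    (lebS_tendsto hq (b := fun _ => 0) tendsto_const_nhds (leb_pow_tendsto hq) (by simp)
      (leb_pow_le hq))
  rw [lebS_x_zero, mul_one] at t
  exact tendsto_nhds_unique (tendsto_const_nhds.congr h) t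

open Filter Topology in
lemma leb_lebesgue {q : ℂ} (hq : ‖q‖ < 1) :
    lebS q 1 1 = (∏' k : ℕ, (1 + 1 * q ^ (2 * k + 1))) * ∏' k : ℕ, (1 + 1 * q ^ (1 * k + 1)) := by
  have h : ∀ n : ℕ, lebS q 1 1 =
      (∏ k ∈ Finset.range n, (1 + 1 * q ^ (2 * k + 1))) * lebS q (q ^ (2 * n)) 1 := by
    intro n
    induction n with
    | zero => simp
    | succ n ih =>
      rw [ih, Finset.prod_range_succ, lebS_b hq (leb_pow_le hq _), ← pow_succ, ← pow_succ]
      ring_nf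
  have hp : Tendsto (fun n : ℕ => q ^ (2 * n)) atTop (𝓝 0) :=
    (leb_pow_tendsto hq).comp (tendsto_id.const_mul_atTop' (by norm_num : 0 < 2))
  have t := (leb_mult hq 1 2 1 (by norm_num)).tendsto_prod_tprod_nat.mul
    (lebS_tendsto hq (x := fun _ => 1) hp tendsto_const_nhds (fun n => leb_pow_le hq _) (by simp))
  rw [leb_euler hq] at t
  exact tendsto_nhds_unique (tendsto_const_nhds.congr h) t

open Filter Topology in
/-- A sequence with the q-Pell recurrence has the Lebesgue series as its limit. -/
lemma leb_pell {q : ℂ} (hq : ‖q‖ < 1) (V : ℕ → ℂ) (l : ℂ) (h0 : V 0 = 1) (h1 : V 1 = 1 + 2 * q)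
    (hV : ∀ n, V (n + 2) = V (n + 1) + q ^ (n + 2) * (V (n + 1) + V n))
    (hl : Tendsto V atTop (𝓝 l)) : l = lebS q 1 1 := by
  set T : ℕ → ℂ := fun n => lebS q 1 (q ^ n) with hT
  have hTr : ∀ n, T n = (1 + q ^ (n + 1)) * T (n + 1) + q ^ (n + 1) * T (n + 2) := by
    intro n
    have := lebS_x (b := 1) hq (by simp) (leb_pow_le hq n)
    rw [← pow_succ, ← pow_succ, one_mul] at this
    exact this
  have hTl : Tendsto T atTop (𝓝 1) := by
    have := lebS_tendsto hq (b := fun _ => 1) tendsto_const_nhds (leb_pow_tendsto hq) (by simp)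
      (leb_pow_le hq)
    rwa [lebS_x_zero] at this
  have inv : ∀ n, 2 * lebS q 1 1 = V (n + 1) * (T (n + 1) + T (n + 2)) +
      q ^ (n + 2) * V n * (T (n + 2) + T (n + 3)) := by
    intro n
    induction n with
    | zero =>
      have e0 := hTr 0
      have e1 := hTr 1
      have : T 0 = lebS q 1 1 := by simp [hT]
      rw [h0, h1, ← this]
      norm_num at e0 e1 ⊢
      linear_combination 2 * e0 + e1
    | succ n ih =>
      rw [ih, hV n]
      have e1 := hTr (n + 1)
      have e2 := hTr (n + 2)
      simp only [add_assoc, Nat.reduceAdd] at e1 e2 ⊢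
      linear_combination V (n + 1) * e1 + V (n + 1) * e2
  have sh : ∀ (f : ℕ → ℂ) (a : ℂ) (k : ℕ), Tendsto f atTop (𝓝 a) →
      Tendsto (fun n => f (n + k)) atTop (𝓝 a) := fun f a k h => (tendsto_add_atTop_iff_nat k).2 h
  have t := ((sh V l 1 hl).mul ((sh T 1 1 hTl).add (sh T 1 2 hTl))).add
    (((sh _ 0 2 (leb_pow_tendsto hq)).mul hl).mul ((sh T 1 2 hTl).add (sh T 1 3 hTl)))
  have := tendsto_nhds_unique (tendsto_const_nhds.congr inv) t
  linear_combination -this / 2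

lemma leb_fin1 (q : ℂ) (n : ℕ) : ∏ k ∈ Finset.range (2 * n), (1 - q ^ (k + 1)) =
    (∏ k ∈ Finset.range n, (1 - q ^ (2 * k + 1))) * ∏ k ∈ Finset.range n, (1 - q ^ (2 * k + 2)) := by
  induction n with
  | zero => simp
  | succ n ih =>
    rw [show 2 * (n + 1) = 2 * n + 1 + 1 by ring, Finset.prod_range_succ, Finset.prod_range_succ, ih,
      Finset.prod_range_succ, Finset.prod_range_succ]
    ring

lemma leb_fin2 (q : ℂ) (n : ℕ) : ∏ k ∈ Finset.range (2 * n), (1 - q ^ (2 * k + 2)) =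
    (∏ k ∈ Finset.range n, (1 - q ^ (4 * k + 2))) * ∏ k ∈ Finset.range n, (1 - q ^ (4 * k + 4)) := by
  have := leb_fin1 (q ^ 2) n
  simp only [← pow_mul] at this
  convert this using 4 <;> ring

lemma leb_fin3 (q : ℂ) (n : ℕ) : ∏ k ∈ Finset.range n, (1 - q ^ (4 * k + 2)) =
    (∏ k ∈ Finset.range n, (1 - q ^ (2 * k + 1))) * ∏ k ∈ Finset.range n, (1 + q ^ (2 * k + 1)) := by
  rw [← Finset.prod_mul_distrib]
  exact Finset.prod_congr rfl fun k _ => by ring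

open Filter Topology in
lemma leb_products {q : ℂ} (hq : ‖q‖ < 1) :
    (∏' k : ℕ, (1 + q ^ (k + 1)) / (1 - q ^ (k + 1))) *
        ∏' k : ℕ, (1 - q ^ (4 * k + 2)) ^ 2 * (1 - q ^ (4 * k + 4)) =
    (∏' k : ℕ, (1 + 1 * q ^ (2 * k + 1))) * ∏' k : ℕ, (1 + 1 * q ^ (1 * k + 1)) := by
  have mO : Multipliable (fun k : ℕ => 1 - q ^ (4 * k + 2)) :=
    (leb_mult hq (-1) 4 2 (by norm_num)).congr fun k => by ring
  have mF : Multipliable (fun k : ℕ => 1 - q ^ (4 * k + 4)) :=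
    (leb_mult hq (-1) 4 4 (by norm_num)).congr fun k => by ring
  have mP : Multipliable (fun k : ℕ => 1 + q ^ (k + 1)) :=
    (leb_mult hq 1 1 1 (by norm_num)).congr fun k => by ring
  have mQ : Multipliable (fun k : ℕ => 1 + q ^ (2 * k + 1)) :=
    (leb_mult hq 1 2 1 (by norm_num)).congr fun k => by ring
  have mR : Multipliable (fun k : ℕ => (1 + q ^ (k + 1)) / (1 - q ^ (k + 1))) := by
    have : Multipliable (fun k : ℕ => 1 + 2 * q ^ (k + 1) / (1 - q ^ (k + 1))) := by
      apply multipliable_one_add_of_summable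
      have hg := (summable_geometric_of_lt_one (norm_nonneg _) hq).mul_left (2 / (1 - ‖q‖))
      refine Summable.of_nonneg_of_le (fun k => norm_nonneg _) (fun k => ?_) hg
      have h3 : ‖q‖ ^ (k + 1) ≤ ‖q‖ := by
        simpa using pow_le_pow_of_le_one (norm_nonneg q) hq.le (show 1 ≤ k + 1 by omega)
      have h3' : ‖q‖ ^ (k + 1) ≤ ‖q‖ ^ k :=
        pow_le_pow_of_le_one (norm_nonneg q) hq.le (by omega)
      have h4 : 1 - ‖q‖ ^ (k + 1) ≤ ‖1 - q ^ (k + 1)‖ := by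
        have := norm_sub_norm_le (1 : ℂ) (q ^ (k + 1))
        simpa using this
      rw [norm_div, norm_mul, norm_pow, Complex.norm_ofNat, div_mul_eq_mul_div]
      apply div_le_div₀ (by positivity) (by linarith) (by linarith) (by linarith)
    refine this.congr fun k => ?_
    have := leb_one_sub_ne hq k
    field_simp
    ring
  have hX : ∏' k : ℕ, (1 - q ^ (4 * k + 2)) ^ 2 * (1 - q ^ (4 * k + 4)) =
      (∏' k : ℕ, (1 - q ^ (4 * k + 2))) * (∏' k : ℕ, (1 - q ^ (4 * k + 2))) *
        ∏' k : ℕ, (1 - q ^ (4 * k + 4)) := by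
    rw [← mO.tprod_mul mO, ← (mO.mul mO).tprod_mul mF]
    exact tprod_congr fun k => by ring
  rw [hX]
  simp only [one_mul]
  have h2 : Tendsto (fun n : ℕ => 2 * n) atTop atTop := tendsto_id.const_mul_atTop' (by norm_num)
  have h4 : Tendsto (fun n : ℕ => 2 * (2 * n)) atTop atTop := h2.comp h2
  have tl := (mR.tendsto_prod_tprod_nat.comp h4).mul
    (((mO.tendsto_prod_tprod_nat.comp h2).mul mO.tendsto_prod_tprod_nat).mul
      mF.tendsto_prod_tprod_nat)
  have tr := (mQ.tendsto_prod_tprod_nat.comp h2).mul (mP.tendsto_prod_tprod_nat.comp h4)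
  refine tendsto_nhds_unique (tl.congr fun n => ?_) tr
  simp only [Function.comp]
  have hne : ∏ k ∈ Finset.range (2 * (2 * n)), (1 - q ^ (k + 1)) ≠ 0 :=
    Finset.prod_ne_zero_iff.2 fun k _ => leb_one_sub_ne hq k
  have e1 := leb_fin1 q (2 * n)
  rw [leb_fin2] at e1
  rw [Finset.prod_div_distrib, leb_fin3 q (2 * n), div_mul_eq_mul_div, div_eq_iff hne, e1]
  ring

open Classical in
/-- Weight of a pair of part sets. -/
noncomputable def rrG (q : ℂ) (A B : Finset ℕ) : ℂ :=
  if TwoColoredRR (A, B) then q ^ (A.sum id + B.sum id) else 0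

lemma rr_insert_left {A B : Finset ℕ} {n : ℕ} (hA : A ⊆ Finset.range (n + 2))
    (hB : B ⊆ Finset.range (n + 2)) :
    TwoColoredRR (insert (n + 2) A, B) ↔ n + 1 ∉ A ∧ TwoColoredRR (A, B) := by
  have hA' : ∀ a ∈ A, a < n + 2 := fun a ha => Finset.mem_range.1 (hA ha)
  have hB' : ∀ a ∈ B, a < n + 2 := fun a ha => Finset.mem_range.1 (hB ha)
  have hnB : n + 2 ∉ B := fun h => by have := hB' _ h; omega
  simp only [TwoColoredRR, IsRRColor, Finset.disjoint_insert_left, Finset.mem_insert,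
    forall_eq_or_imp]
  constructor
  · rintro ⟨⟨⟨_, h1⟩, ⟨_, h2⟩, h3⟩, h4, _, h5⟩
    refine ⟨fun h => ?_, ⟨h1, fun a ha => (h3 a ha).2⟩, h4, h5⟩
    have := h2 _ h (by omega)
    omega
  · rintro ⟨h0, ⟨h1, h2⟩, h4, h5⟩
    refine ⟨⟨⟨by omega, h1⟩, ⟨by simp, fun a ha _ => ?_⟩, fun a ha => ⟨fun _ => ?_, h2 a ha⟩⟩, h4,
      hnB, h5⟩
    all_goals
      have := hA' a ha
      have : a ≠ n + 1 := fun h => h0 (h ▸ ha)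
      omega

lemma rr_symm {A B : Finset ℕ} : TwoColoredRR (A, B) ↔ TwoColoredRR (B, A) := by
  simp only [TwoColoredRR]
  rw [disjoint_comm]; tauto

lemma rrG_symm (q : ℂ) (A B : Finset ℕ) : rrG q A B = rrG q B A := by
  unfold rrG
  by_cases h : TwoColoredRR (A, B)
  · rw [if_pos h, if_pos (rr_symm.1 h), add_comm]
  · rw [if_neg h, if_neg (fun h' => h (rr_symm.1 h'))]

lemma rrG_insert_left (q : ℂ) {A B : Finset ℕ} {n : ℕ} (hA : A ⊆ Finset.range (n + 2))
    (hB : B ⊆ Finset.range (n + 2)) :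
    rrG q (insert (n + 2) A) B = if n + 1 ∈ A then 0 else q ^ (n + 2) * rrG q A B := by
  have hn : n + 2 ∉ A := fun h => by have := Finset.mem_range.1 (hA h); omega
  unfold rrG
  rw [Finset.sum_insert hn]
  have hi := rr_insert_left hA hB
  by_cases h : n + 1 ∈ A
  · rw [if_pos h, if_neg (fun h' => (hi.1 h').1 h)]
  · rw [if_neg h]
    by_cases h2 : TwoColoredRR (A, B)
    · rw [if_pos h2, if_pos (hi.2 ⟨h, h2⟩)]
      simp only [id]
      ring
    · rw [if_neg h2, if_neg (fun h' => h2 (hi.1 h').2), mul_zero]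

lemma rrG_both (q : ℂ) (A B : Finset ℕ) (n : ℕ) : rrG q (insert n A) (insert n B) = 0 := by
  unfold rrG
  rw [if_neg]
  rintro ⟨_, _, h⟩
  exact Finset.disjoint_left.1 h (Finset.mem_insert_self n A) (Finset.mem_insert_self n B)

/-- Finite generating function. -/
noncomputable def rrV (q : ℂ) (n : ℕ) : ℂ :=
  ∑ A ∈ (Finset.range (n + 1)).powerset, ∑ B ∈ (Finset.range (n + 1)).powerset, rrG q A B

/-- Finite generating function with `n + 1` in the first color. -/
noncomputable def rrX (q : ℂ) (n : ℕ) : ℂ :=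
  ∑ A ∈ (Finset.range (n + 1)).powerset, ∑ B ∈ (Finset.range (n + 1)).powerset,
    rrG q (insert (n + 1) A) B

lemma rrX_symm (q : ℂ) (n : ℕ) :
  ∑ A ∈ (Finset.range (n + 1)).powerset, ∑ B ∈ (Finset.range (n + 1)).powerset,
    rrG q A (insert (n + 1) B) = rrX q n := by
  rw [Finset.sum_comm, rrX]
  exact Finset.sum_congr rfl fun A _ => Finset.sum_congr rfl fun B _ => rrG_symm q _ _

lemma rrV_succ (q : ℂ) (n : ℕ) : rrV q (n + 1) = rrV q n + 2 * rrX q n := by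
  have hn : n + 1 ∉ Finset.range (n + 1) := Finset.notMem_range_self
  rw [rrV, Finset.range_add_one (n := n + 1)]
  simp only [Finset.sum_powerset_insert hn, Finset.sum_add_distrib, rrG_both]
  rw [rrX_symm, ← rrV, ← rrX]
  simp; ring

lemma rrX_succ (q : ℂ) (n : ℕ) : rrX q (n + 1) = q ^ (n + 2) * (rrV q n + rrX q n) := by
  have hn : n + 1 ∉ Finset.range (n + 1) := Finset.notMem_range_self
  have h1 : rrX q (n + 1) = ∑ A ∈ (Finset.range (n + 2)).powerset,
      ∑ B ∈ (Finset.range (n + 2)).powerset,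
        if n + 1 ∈ A then 0 else q ^ (n + 2) * rrG q A B := by
    rw [rrX]
    exact Finset.sum_congr rfl fun A hA => Finset.sum_congr rfl fun B hB =>
      rrG_insert_left q (Finset.mem_powerset.1 hA) (Finset.mem_powerset.1 hB)
  have h2 : ∀ A ∈ (Finset.range (n + 1)).powerset, n + 1 ∉ A :=
    fun A hA h => hn (Finset.mem_powerset.1 hA h)
  rw [h1, Finset.range_add_one (n := n + 1), Finset.sum_powerset_insert hn]
  simp only [Finset.sum_powerset_insert hn, Finset.mem_insert_self, if_true,
    Finset.sum_const_zero, add_zero]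
  rw [← rrX_symm, rrV, ← Finset.sum_add_distrib, Finset.mul_sum]
  refine Finset.sum_congr rfl fun A hA => ?_
  simp only [h2 A hA, if_false, ← Finset.mul_sum]
  ring

lemma rrV_zero (q : ℂ) : rrV q 0 = 1 := by
  have h : (Finset.range (0 + 1)).powerset = {∅, {0}} := by decide
  have e : (∅ : Finset ℕ) ∉ ({{0}} : Finset (Finset ℕ)) := by decide
  rw [rrV, h]
  simp [Finset.sum_insert e, rrG, TwoColoredRR, IsRRColor]

lemma rrX_zero (q : ℂ) : rrX q 0 = q := by
  have h : (Finset.range (0 + 1)).powerset = {∅, {0}} := by decide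
  have e : (∅ : Finset ℕ) ∉ ({{0}} : Finset (Finset ℕ)) := by decide
  rw [rrX, h]
  simp [Finset.sum_insert e, rrG, TwoColoredRR, IsRRColor]

lemma rrV_rec (q : ℂ) (n : ℕ) :
    rrV q (n + 2) = rrV q (n + 1) + q ^ (n + 2) * (rrV q (n + 1) + rrV q n) := by
  rw [rrV_succ q (n + 1), rrX_succ, rrV_succ q n]; ring

lemma rr_summable {q : ℂ} (hq : ‖q‖ < 1) :
    Summable (fun p : Finset ℕ × Finset ℕ => ‖q‖ ^ (p.1.sum id + p.2.sum id)) := by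
  have h0 : ∀ s : Finset ℕ, ∏ i ∈ s, ‖q‖ ^ i = ‖q‖ ^ (s.sum id) := fun s => by
    simpa using Finset.prod_pow_eq_pow_sum s id ‖q‖
  have h := summable_finsetProd_of_summable_nonneg (f := fun i : ℕ => ‖q‖ ^ i)
    (fun i => by positivity) (summable_geometric_of_lt_one (norm_nonneg _) hq)
  simp only [h0] at h
  have := h.mul_of_nonneg h (fun s => by positivity) (fun s => by positivity)
  simpa only [pow_add] using this

lemma rrG_summable {q : ℂ} (hq : ‖q‖ < 1) :
    Summable (fun p : Finset ℕ × Finset ℕ => rrG q p.1 p.2) := by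
  refine Summable.of_norm_bounded (rr_summable hq) fun p => ?_
  unfold rrG
  split_ifs
  · rw [norm_pow]
  · simp

open Filter Topology in
lemma rrV_tendsto {q : ℂ} (hq : ‖q‖ < 1) :
    Tendsto (rrV q) atTop (𝓝 (∑' p : Finset ℕ × Finset ℕ, rrG q p.1 p.2)) := by
  have h := (rrG_summable hq).hasSum
  have t : Tendsto (fun n : ℕ => (Finset.range (n + 1)).powerset ×ˢ (Finset.range (n + 1)).powerset)
      atTop atTop := by
    apply tendsto_atTop_finset_of_monotone
    · intro a b hab
      have : Finset.range (a + 1) ⊆ Finset.range (b + 1) := Finset.range_mono (by omega)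
      exact Finset.product_subset_product (Finset.powerset_mono.2 this) (Finset.powerset_mono.2 this)
    · rintro ⟨A, B⟩
      refine ⟨A.sup id + B.sup id, ?_⟩
      simp only [Finset.mem_product, Finset.mem_powerset]
      constructor <;> intro a ha <;> rw [Finset.mem_range]
      · have := Finset.le_sup (f := id) ha
        simp only [id] at this ⊢
        omega
      · have := Finset.le_sup (f := id) ha
        simp only [id] at this ⊢
        omega
  refine (h.comp t).congr fun n => ?_
  simp only [Function.comp, rrV, Finset.sum_product]

lemma rr_tsum {q : ℂ} (hq : ‖q‖ < 1) :
    ∑' n : ℕ, (Rcount n : ℂ) * q ^ n = ∑' p : Finset ℕ × Finset ℕ, rrG q p.1 p.2 := by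
  classical
  have h1 : ∑' p : Finset ℕ × Finset ℕ, rrG q p.1 p.2 =
      ∑' p : {p : Finset ℕ × Finset ℕ // TwoColoredRR p}, q ^ (p.1.1.sum id + p.1.2.sum id) := by
    have := tsum_subtype {p : Finset ℕ × Finset ℕ | TwoColoredRR p}
      (fun p => q ^ (p.1.sum id + p.2.sum id))
    refine Eq.trans ?_ this.symm
    refine tsum_congr fun p => ?_
    simp [rrG, Set.indicator_apply]
  rw [h1]
  have hs : Summable (fun p : {p : Finset ℕ × Finset ℕ // TwoColoredRR p} =>
      q ^ (p.1.1.sum id + p.1.2.sum id)) := by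
    have : Summable (fun p : Finset ℕ × Finset ℕ => q ^ (p.1.sum id + p.2.sum id)) :=
      Summable.of_norm (by simpa only [norm_pow] using rr_summable hq)
    exact this.subtype {p | TwoColoredRR p}
  have h2 := hs.hasSum.tsum_fiberwise
    (fun p : {p : Finset ℕ × Finset ℕ // TwoColoredRR p} => p.1.1.sum id + p.1.2.sum id)
  rw [← h2.tsum_eq]
  refine tsum_congr fun n => ?_
  have h3 : ∀ x : ((fun p : {p : Finset ℕ × Finset ℕ // TwoColoredRR p} =>
      p.1.1.sum id + p.1.2.sum id) ⁻¹' {n}), q ^ (x.1.1.1.sum id + x.1.1.2.sum id) = q ^ n := by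
    rintro ⟨x, hx⟩
    have hx : x.1.1.sum id + x.1.2.sum id = n := hx
    simp only [hx]
  rw [tsum_congr h3, tsum_const, nsmul_eq_mul, Rcount]
  congr 2
  exact Nat.card_congr (Equiv.subtypeSubtypeEquivSubtypeInter TwoColoredRR
    (fun p => p.1.sum id + p.2.sum id = n)).symm

/-- `∑_{n≥0} R(n) qⁿ = [∏_{k≥1} (1+qᵏ)/(1-qᵏ)] · ∏_{k≥0} (1-q^{4k+2})² (1-q^{4k+4})`. -/
theorem Rcount_genfun (q : ℂ) (hq : ‖q‖ < 1) :
    ∑' n : ℕ, (Rcount n : ℂ) * q ^ n =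
      (∏' k : ℕ, (1 + q ^ (k + 1)) / (1 - q ^ (k + 1))) *
        ∏' k : ℕ, (1 - q ^ (4 * k + 2)) ^ 2 * (1 - q ^ (4 * k + 4)) := by
  rw [leb_products hq, ← leb_lebesgue hq, rr_tsum hq]
  refine leb_pell hq (rrV q) _ (rrV_zero q) ?_ (rrV_rec q) (rrV_tendsto hq)
  rw [rrV_succ q 0, rrV_zero, rrX_zero]
end

section
/- Let R₃(n) denote the number of 2-colored Rogers-Ramanujan partitions of n in which the part 1 never occurs in the red color. Then ∑_{n≥0} R₃(n) q^n = (-q;q)_∞ (q; q^4)_∞ (q^3; q^4)_∞ (q^4; q^4)_∞ / (q;q)_∞. -/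
/-- Infinite q-Pochhammer symbol `(a;q)_∞ = ∏_{i≥0} (1 - a qⁱ)`. -/
noncomputable def qPochInf (a q : ℂ) : ℂ := ∏' i : ℕ, (1 - a * q ^ i)

/-- Finite q-Pochhammer symbol `(a;q)_n = ∏_{i=0}^{n-1} (1 - a qⁱ)`. -/
noncomputable def qPoch (a q : ℂ) (n : ℕ) : ℂ := ∏ i ∈ Finset.range n, (1 - a * q ^ i)

/-- `R₃ n`: the number of 2-colored Rogers-Ramanujan partitions of `n` (black parts
`p.1`, red parts `p.2`) in which the part `1` never occurs in the red color. -/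
noncomputable def R3count (n : ℕ) : ℕ :=
  Nat.card {p : Finset ℕ × Finset ℕ // TwoColoredRR p ∧ 1 ∉ p.2 ∧
    p.1.sum id + p.2.sum id = n}


namespace RR

open Filter Topology Finset

/-! ### Analytic part -/

noncomputable def c (q : ℂ) (n : ℕ) : ℂ := ∏ i ∈ range n, (q ^ (i+1) / (1 - q ^ (i+1)))

noncomputable def P (q z : ℂ) (n : ℕ) : ℂ := ∏ i ∈ range n, (1 + z * q ^ (i+1))

noncomputable def B (r : ℝ) (n : ℕ) : ℝ :=
  ∏ i ∈ range n, (r ^ (i+1) / (1 - r ^ (i+1)) * (1 + r ^ (i+1)))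

lemma one_sub_ne {q : ℂ} (hq : ‖q‖ < 1) (n : ℕ) : 1 - q ^ (n+1) ≠ 0 := by
  intro h
  have h1 : q ^ (n+1) = 1 := by linear_combination -h
  have h2 : ‖q‖ ^ (n+1) < 1 := pow_lt_one₀ (norm_nonneg _) hq (by omega)
  rw [← norm_pow, h1] at h2
  simp at h2

lemma c_succ {q : ℂ} (hq : ‖q‖ < 1) (n : ℕ) :
    c q (n+1) * (1 - q ^ (n+1)) = c q n * q ^ (n+1) := by
  have := one_sub_ne hq n
  rw [c, prod_range_succ, ← c]
  field_simp

lemma B_nonneg {r : ℝ} (h0 : 0 ≤ r) (h1 : r < 1) (n : ℕ) : 0 ≤ B r n := by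
  apply prod_nonneg
  intro i _
  have : r ^ (i+1) < 1 := pow_lt_one₀ h0 h1 (by omega)
  have : 0 < 1 - r ^ (i+1) := by linarith
  positivity

lemma B_summable {r : ℝ} (h0 : 0 ≤ r) (h1 : r < 1) : Summable (B r) := by
  have ht : Tendsto (fun n : ℕ => r ^ (n+1)) atTop (𝓝 0) :=
    (tendsto_pow_atTop_nhds_zero_of_lt_one h0 h1).comp (tendsto_add_atTop_nat 1)
  have ht2 : Tendsto (fun n : ℕ => r ^ (n+1) / (1 - r ^ (n+1)) * (1 + r ^ (n+1))) atTop
      (𝓝 (0 / (1 - 0) * (1 + 0))) :=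
    (ht.div (tendsto_const_nhds.sub ht) (by norm_num)).mul (tendsto_const_nhds.add ht)
  have ht3 := ht2.eventually_le_const (u := (1/2 : ℝ)) (by norm_num)
  refine summable_of_ratio_norm_eventually_le (r := 1/2) (by norm_num) ?_
  filter_upwards [ht3] with n hn
  rw [Real.norm_of_nonneg (B_nonneg h0 h1 _), Real.norm_of_nonneg (B_nonneg h0 h1 _)]
  rw [B, prod_range_succ, ← B, mul_comm]
  exact mul_le_mul_of_nonneg_right hn (B_nonneg h0 h1 _)

lemma cP_bound {q : ℂ} (hq : ‖q‖ < 1) {z : ℂ} (hz : ‖z‖ ≤ 1) (n : ℕ) :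
    ‖c q n * P q z n‖ ≤ B ‖q‖ n := by
  rw [c, P, ← prod_mul_distrib, norm_prod, B]
  apply Finset.prod_le_prod
  · intros; positivity
  · intro i _
    have h1 : ‖q‖ ^ (i+1) < 1 := pow_lt_one₀ (norm_nonneg _) hq (by omega)
    have h2 : 0 < 1 - ‖q‖ ^ (i+1) := by linarith
    rw [norm_mul, norm_div, norm_pow]
    have h3 : 1 - ‖q‖ ^ (i+1) ≤ ‖1 - q ^ (i+1)‖ := by
      have := norm_sub_norm_le (1:ℂ) (q ^ (i+1))
      simpa using this
    have h4 : ‖1 + z * q ^ (i+1)‖ ≤ 1 + ‖q‖ ^ (i+1) := by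
      refine (norm_add_le _ _).trans ?_
      rw [norm_one, norm_mul, norm_pow]
      have : ‖z‖ * ‖q‖ ^ (i+1) ≤ 1 * ‖q‖ ^ (i+1) :=
        mul_le_mul_of_nonneg_right hz (by positivity)
      linarith
    gcongr

lemma P_succ' (q z : ℂ) (n : ℕ) : P q z (n+1) = (1 + z * q) * P q (z * q) n := by
  rw [P, prod_range_succ', P, mul_comm]
  congr 1
  · simp
  · apply prod_congr rfl; intros; ring

lemma P_succ (q z : ℂ) (n : ℕ) : P q z (n+1) = P q z n * (1 + z * q ^ (n+1)) := by
  rw [P, prod_range_succ, ← P]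

lemma P_zero (q : ℂ) (n : ℕ) : P q 0 n = 1 := by simp [P]

lemma cP_summable {q : ℂ} (hq : ‖q‖ < 1) {z : ℂ} (hz : ‖z‖ ≤ 1) :
    Summable (fun n => c q n * P q z n) :=
  (B_summable (norm_nonneg q) hq).of_norm_bounded (cP_bound hq hz)

lemma telescope {q : ℂ} (hq : ‖q‖ < 1) (z : ℂ) (N : ℕ) :
    ∑ n ∈ range (N+1), (c q n * P q z n - (1 + z * q ^ 2) * (c q n * P q (z * q ^ 2) n)) =
      - (z * q ^ 2 * (q ^ N * (c q N * P q (z * q) N))) := by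
  have key : ∀ n, (1 + z * q ^ 2) * P q (z * q ^ 2) n = P q (z * q) (n+1) := by
    intro n; rw [P_succ']; ring_nf
  induction N with
  | zero => simp [c, P]
  | succ N ih =>
    rw [sum_range_succ, ih]
    have h1 : (1 + z * q ^ 2) * (c q (N+1) * P q (z * q ^ 2) (N+1)) =
      c q (N+1) * P q (z * q) (N+1+1) := by rw [← key]; ring
    rw [h1, P_succ' q z, P_succ q (z*q) (N+1), P_succ q (z*q) N]
    linear_combination (z * q * P q (z * q) N) * (c_succ hq N)

noncomputable def S (q z : ℂ) : ℂ := ∑' n, c q n * P q z n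

lemma norm_mul_pow_le {q : ℂ} (hq : ‖q‖ < 1) {z : ℂ} (hz : ‖z‖ ≤ 1) (k : ℕ) :
    ‖z * q ^ k‖ ≤ 1 := by
  rw [norm_mul, norm_pow]
  exact mul_le_one₀ hz (by positivity) (pow_le_one₀ (norm_nonneg _) hq.le)

lemma S_step {q : ℂ} (hq : ‖q‖ < 1) {z : ℂ} (hz : ‖z‖ ≤ 1) :
    S q z = (1 + z * q ^ 2) * S q (z * q ^ 2) := by
  have s1 := cP_summable hq hz
  have s2 := (cP_summable hq (norm_mul_pow_le hq hz 2)).mul_left (1 + z * q ^ 2)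
  have h1 := ((s1.sub s2).hasSum.tendsto_sum_nat).comp (tendsto_add_atTop_nat 1)
  have h2 : Tendsto (fun N => - (z * q ^ 2 * (q ^ N * (c q N * P q (z * q) N)))) atTop
      (𝓝 (-(z * q ^ 2 * (0 * 0)))) := by
    refine (((tendsto_pow_atTop_nhds_zero_of_norm_lt_one hq).mul ?_).const_mul _).neg
    have := (cP_summable hq (norm_mul_pow_le hq hz 1)).tendsto_atTop_zero
    simpa using this
  have h3 := tendsto_nhds_unique h1 (h2.congr (fun N => (telescope hq z N).symm))
  rw [s1.tsum_sub s2, tsum_mul_left] at h3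
  rw [S, S]
  linear_combination h3

lemma qPochInf_mult (a : ℂ) {q : ℂ} (hq : ‖q‖ < 1) :
    Multipliable (fun i : ℕ => 1 - a * q ^ i) := by
  have : Summable (fun i : ℕ => ‖-(a * q ^ i)‖) := by
    simp only [norm_neg, norm_mul, norm_pow]
    exact (summable_geometric_of_lt_one (norm_nonneg _) hq).mul_left _
  simpa [sub_eq_add_neg] using multipliable_one_add_of_summable this

/-- If `f x = (1 + x a) f (x p)` and `f` behaves at zero, then `f 1 = (-a;p)_∞ L`. -/
lemma iterate {p a L : ℂ} (hp : ‖p‖ < 1) (f : ℕ → ℂ)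
    (hf : ∀ n, f n = (1 + a * p ^ n) * f (n+1)) (hL : Tendsto f atTop (𝓝 L)) :
    f 0 = qPochInf (-a) p * L := by
  have h1 : ∀ n, f 0 = (∏ i ∈ range n, (1 - (-a) * p ^ i)) * f n := by
    intro n
    induction n with
    | zero => simp
    | succ n ih => rw [ih, prod_range_succ, hf n]; ring
  have h2 := ((qPochInf_mult (-a) hp).tendsto_prod_tprod_nat).mul hL
  have h3 := h2.congr (fun n => (h1 n).symm)
  exact (tendsto_nhds_unique h3 tendsto_const_nhds).symm

lemma c_bound {q : ℂ} (hq : ‖q‖ < 1) (n : ℕ) : ‖c q n‖ ≤ B ‖q‖ n := by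
  simpa [P_zero] using cP_bound hq (z := 0) (by simp) n

lemma S_one {q : ℂ} (hq : ‖q‖ < 1) : S q 1 = qPochInf (-(q ^ 2)) (q ^ 2) * S q 0 := by
  have hp : ‖q ^ 2‖ < 1 := by
    rw [norm_pow]; exact pow_lt_one₀ (norm_nonneg _) hq (by norm_num)
  have ht : Tendsto (fun n : ℕ => (q ^ 2) ^ n) atTop (𝓝 0) :=
    tendsto_pow_atTop_nhds_zero_of_norm_lt_one hp
  have hb : ∀ n : ℕ, ‖(q ^ 2) ^ n‖ ≤ 1 := by
    intro n; rw [norm_pow]; exact pow_le_one₀ (norm_nonneg _) hp.le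
  have := iterate (L := S q 0) hp (a := q ^ 2) (fun n => S q ((q ^ 2) ^ n)) ?_ ?_
  · simpa using this
  · intro n
    rw [S_step hq (hb n), pow_succ (q ^ 2) n]
    ring
  · refine tendsto_tsum_of_dominated_convergence (B_summable (norm_nonneg q) hq) ?_ ?_
    · intro k
      refine Tendsto.const_mul _ ?_
      unfold P
      refine tendsto_finsetProd _ (fun i _ => ?_)
      exact tendsto_const_nhds.add (ht.mul_const _)
    · exact Eventually.of_forall fun n k => cP_bound hq (hb n) k

/-- bounded coefficient power series. -/
lemma ps_summable {q : ℂ} (hq : ‖q‖ < 1) {b : ℕ → ℂ} (hb : ∀ n, ‖b n‖ ≤ B ‖q‖ n) {x : ℂ}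
    (hx : ‖x‖ ≤ 1) : Summable (fun n => b n * x ^ n) := by
  refine (B_summable (norm_nonneg q) hq).of_norm_bounded (fun n => ?_)
  rw [norm_mul, norm_pow]
  exact (mul_le_of_le_one_right (norm_nonneg _) (pow_le_one₀ (norm_nonneg _) hx)).trans (hb n)

lemma ps_tendsto {q : ℂ} (hq : ‖q‖ < 1) {b : ℕ → ℂ} (hb : ∀ n, ‖b n‖ ≤ B ‖q‖ n) (h0 : b 0 = 1) :
    Tendsto (fun k : ℕ => ∑' n, b n * (q ^ k) ^ n) atTop (𝓝 1) := by
  have h1 : ∑' n, b n * (0:ℂ) ^ n = 1 := by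
    rw [tsum_eq_single 0]
    · simp [h0]
    · intro n hn; simp [hn]
  rw [← h1]
  refine tendsto_tsum_of_dominated_convergence (B_summable (norm_nonneg q) hq) ?_ ?_
  · intro n
    exact ((tendsto_pow_atTop_nhds_zero_of_norm_lt_one hq).pow n).const_mul _
  · refine Eventually.of_forall fun k n => ?_
    rw [norm_mul, norm_pow]
    refine (mul_le_of_le_one_right (norm_nonneg _) (pow_le_one₀ (norm_nonneg _) ?_)).trans (hb n)
    rw [norm_pow]; exact pow_le_one₀ (norm_nonneg _) hq.le

lemma S_zero {q : ℂ} (hq : ‖q‖ < 1) : S q 0 = qPochInf (-q) q := by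
  have hb := c_bound hq
  have := iterate (L := 1) hq (a := q) (fun k => ∑' n, c q n * (q ^ k) ^ n) ?_
    (ps_tendsto hq hb (by simp [c]))
  · simpa [S, P_zero] using this
  · intro k
    have hk : ∀ k : ℕ, ‖q ^ k‖ ≤ 1 := fun k => by
      rw [norm_pow]; exact pow_le_one₀ (norm_nonneg _) hq.le
    have s1 := ps_summable hq hb (hk k)
    have s2 := ps_summable hq hb (hk (k+1))
    have e : ∑' n, (c q n * (q ^ k) ^ n - c q n * (q ^ (k+1)) ^ n) =
        q * q ^ k * ∑' n, c q n * (q ^ (k+1)) ^ n := by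
      rw [(s1.sub s2).tsum_eq_zero_add, ← tsum_mul_left]
      simp only [pow_zero, sub_self, zero_add]
      refine tsum_congr fun n => ?_
      have := c_succ hq n
      simp only [pow_succ, mul_pow] at this ⊢
      linear_combination (q^k)^n * q^k * this
    rw [s1.tsum_sub s2] at e
    linear_combination e

noncomputable def h (q : ℂ) (k : ℕ) : ℂ := ∑' n, (c q n * P q 1 n) * (q ^ k) ^ n

lemma h_zero {q : ℂ} (hq : ‖q‖ < 1) :
    h q 0 = qPochInf (-(q ^ 2)) (q ^ 2) * qPochInf (-q) q := by
  rw [← S_zero hq, ← S_one hq]; simp [h, S]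

lemma h_tendsto {q : ℂ} (hq : ‖q‖ < 1) : Tendsto (h q) atTop (𝓝 1) :=
  ps_tendsto hq (cP_bound hq (by simp)) (by simp [c, P])

lemma h_rec {q : ℂ} (hq : ‖q‖ < 1) (k : ℕ) :
    h q k = (1 + q ^ (k+1)) * h q (k+1) + q ^ (k+2) * h q (k+2) := by
  have hb := cP_bound hq (z := 1) (by simp)
  have hk : ∀ k : ℕ, ‖q ^ k‖ ≤ 1 := fun k => by
    rw [norm_pow]; exact pow_le_one₀ (norm_nonneg _) hq.le
  have s1 := ps_summable hq hb (hk k)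
  have s2 := ps_summable hq hb (hk (k+1))
  have s3 := ps_summable hq hb (hk (k+2))
  have e : ∑' n, (c q n * P q 1 n * (q ^ k) ^ n - c q n * P q 1 n * (q ^ (k+1)) ^ n) =
      q ^ (k+1) * ∑' n, c q n * P q 1 n * (q ^ (k+1)) ^ n +
      q ^ (k+2) * ∑' n, c q n * P q 1 n * (q ^ (k+2)) ^ n := by
    rw [(s1.sub s2).tsum_eq_zero_add, ← tsum_mul_left, ← tsum_mul_left,
      ← (s2.mul_left _).tsum_add (s3.mul_left _)]
    simp only [pow_zero, sub_self, zero_add]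
    refine tsum_congr fun n => ?_
    have := c_succ hq n
    rw [P_succ]
    simp only [pow_succ, mul_pow] at this ⊢
    linear_combination (q^k)^n * q^k * P q 1 n * (1 + q^n * q) * this
  rw [s1.tsum_sub s2] at e
  simp only [h]
  linear_combination e

lemma unique {q : ℂ} (hq : ‖q‖ < 1) (d : ℕ → ℂ) (hd : Tendsto d atTop (𝓝 0))
    (hrec : ∀ k, d k = (1 + q ^ (k+1)) * d (k+1) + q ^ (k+2) * d (k+2)) : d 0 = 0 := by
  set r := ‖q‖
  have hr : 0 ≤ r := norm_nonneg q
  set M : ℕ → ℝ := fun k => max ‖d k‖ ‖d (k+1)‖ with hM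
  have hM0 : ∀ k, 0 ≤ M k := fun k => le_max_of_le_left (norm_nonneg _)
  have hstep : ∀ k, M k ≤ (1 + 2 * r ^ k) * M (k+1) := by
    intro k
    have a1 : ‖d (k+1)‖ ≤ M (k+1) := le_max_left _ _
    have a2 : ‖d (k+2)‖ ≤ M (k+1) := le_max_right _ _
    have rk : 0 ≤ r ^ k := by positivity
    apply max_le
    · rw [hrec k]
      refine (norm_add_le _ _).trans ?_
      rw [norm_mul, norm_mul, norm_pow]
      have b1 : ‖1 + q ^ (k+1)‖ ≤ 1 + r ^ k := by
        refine (norm_add_le _ _).trans ?_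
        rw [norm_one, norm_pow]
        have : ‖q‖ ^ (k+1) ≤ r ^ k := pow_le_pow_of_le_one hr hq.le (by omega)
        linarith
      have b2 : ‖q‖ ^ (k+2) ≤ r ^ k := pow_le_pow_of_le_one hr hq.le (by omega)
      calc _ ≤ (1 + r ^ k) * M (k+1) + r ^ k * M (k+1) := by gcongr
        _ = _ := by ring
    · have : 0 ≤ r ^ k * M (k+1) := mul_nonneg rk (hM0 _)
      nlinarith
  have hprod : ∀ n, M 0 ≤ (∏ i ∈ range n, (1 + 2 * r ^ i)) * M n := by
    intro n
    induction n with
    | zero => simp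
    | succ n ih =>
      rw [prod_range_succ, mul_assoc]
      exact ih.trans (mul_le_mul_of_nonneg_left (hstep n) (prod_nonneg fun i _ => by positivity))
  have hmul : Multipliable (fun i : ℕ => 1 + 2 * r ^ i) :=
    Real.multipliable_one_add_of_summable ((summable_geometric_of_lt_one hr hq).mul_left 2)
  have hMt : Tendsto M atTop (𝓝 0) := by
    have := hd.norm.max (hd.norm.comp (tendsto_add_atTop_nat 1))
    simpa using this
  have := ge_of_tendsto' (hmul.tendsto_prod_tprod_nat.mul hMt) hprod
  rw [mul_zero] at this
  exact norm_le_zero_iff.1 ((le_max_left _ _).trans this)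

/-! ### Products -/

lemma qPochInf_split (a : ℂ) {q : ℂ} (hq : ‖q‖ < 1) :
    qPochInf a q = qPochInf a (q ^ 2) * qPochInf (a * q) (q ^ 2) := by
  have hp : ‖q ^ 2‖ < 1 := by
    rw [norm_pow]; exact pow_lt_one₀ (norm_nonneg _) hq (by norm_num)
  have e1 : (fun k : ℕ => 1 - a * q ^ (2 * k)) = fun k => 1 - a * (q ^ 2) ^ k := by
    ext k; rw [pow_mul]
  have e2 : (fun k : ℕ => 1 - a * q ^ (2 * k + 1)) = fun k => 1 - (a * q) * (q ^ 2) ^ k := by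
    ext k; rw [pow_succ, pow_mul]; ring
  have := tprod_even_mul_odd (f := fun k => 1 - a * q ^ k)
    (by rw [e1]; exact qPochInf_mult a hp) (by rw [e2]; exact qPochInf_mult _ hp)
  rw [e1, e2] at this
  exact this.symm

lemma qPochInf_mul_neg (a : ℂ) {q : ℂ} (hq : ‖q‖ < 1) :
    qPochInf a q * qPochInf (-a) q = qPochInf (a ^ 2) (q ^ 2) := by
  rw [qPochInf, qPochInf, ← (qPochInf_mult a hq).tprod_mul (qPochInf_mult (-a) hq), qPochInf]
  refine tprod_congr fun k => ?_
  ring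

lemma qPochInf_ne {q : ℂ} (hq : ‖q‖ < 1) : qPochInf q q ≠ 0 := by
  have : Summable (fun i : ℕ => ‖-(q * q ^ i)‖) := by
    simp only [norm_neg, norm_mul, norm_pow]
    exact (summable_geometric_of_lt_one (norm_nonneg _) hq).mul_left _
  have := tprod_one_add_ne_zero_of_summable (f := fun i : ℕ => -(q * q ^ i)) ?_ this
  · simpa [qPochInf, sub_eq_add_neg] using this
  · intro i
    have := one_sub_ne hq i
    rw [pow_succ'] at this
    simpa [sub_eq_add_neg] using this

lemma rhs_eq {q : ℂ} (hq : ‖q‖ < 1) :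
    qPochInf (-q) q * qPochInf q (q ^ 4) * qPochInf (q ^ 3) (q ^ 4) *
        qPochInf (q ^ 4) (q ^ 4) / qPochInf q q =
      qPochInf (-(q ^ 2)) (q ^ 2) * qPochInf (-q) q := by
  have hp : ‖q ^ 2‖ < 1 := by
    rw [norm_pow]; exact pow_lt_one₀ (norm_nonneg _) hq (by norm_num)
  rw [div_eq_iff (qPochInf_ne hq), qPochInf_split q hq, qPochInf_split q hp]
  have h1 := qPochInf_mul_neg (q ^ 2) hp
  have e1 : (q ^ 2) ^ 2 = q ^ 4 := by ring
  have e2 : q * q ^ 2 = q ^ 3 := by ring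
  have e3 : q * q = q ^ 2 := by ring
  rw [e1] at h1 ⊢
  rw [e2, e3, ← h1]
  ring

/-! ### Combinatorial part -/

abbrev Pr := Finset ℕ × Finset ℕ

def F (k : ℕ) : Set Pr := {p | TwoColoredRR p ∧ (∀ a ∈ p.1, k ≤ a) ∧ (∀ a ∈ p.2, k ≤ a)}
def G (k : ℕ) : Set Pr := {p | p ∈ F k ∧ k ∉ p.2}
def G' (k : ℕ) : Set Pr := {p | p ∈ F k ∧ k ∉ p.1}

noncomputable def w (q : ℂ) (p : Pr) : ℂ := q ^ (p.1.sum id + p.2.sum id)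

lemma w_summable {q : ℂ} (hq : ‖q‖ < 1) : Summable (fun p => ‖w q p‖) := by
  have h1 : Summable (fun s : Finset ℕ => ∏ i ∈ s, ‖q‖ ^ i) :=
    summable_finsetProd_of_summable_nonneg (fun i => by positivity)
      (summable_geometric_of_lt_one (norm_nonneg _) hq)
  have h2 := h1.mul_of_nonneg h1 (fun s => prod_nonneg fun _ _ => by positivity)
    (fun s => prod_nonneg fun _ _ => by positivity)
  refine h2.congr fun p => ?_
  rw [w, norm_pow, pow_add, prod_pow_eq_pow_sum, prod_pow_eq_pow_sum]
  simp

lemma rr_iff (A : Finset ℕ) : IsRRColor A ↔ 0 ∉ A ∧ ∀ a ∈ A, a + 1 ∉ A := by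
  constructor
  · rintro ⟨h1, h2⟩
    refine ⟨fun h => by simpa using h1 0 h, fun a ha hb => ?_⟩
    have := h2 a ha (a+1) hb (by omega)
    omega
  · rintro ⟨h1, h2⟩
    refine ⟨fun a ha => ?_, fun a ha b hb hab => ?_⟩
    · rcases Nat.eq_zero_or_pos a with rfl | h
      · exact absurd ha h1
      · exact h
    · by_contra hc
      rcases lt_or_gt_of_ne hab with h | h
      · have : b = a + 1 := by omega
        exact h2 a ha (this ▸ hb)
      · have : a = b + 1 := by omega
        exact h2 b hb (this ▸ ha)

lemma rr_insert {k : ℕ} (hk : 1 ≤ k) {A : Finset ℕ} (hA : ∀ a ∈ A, k + 1 ≤ a) :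
    IsRRColor (insert k A) ↔ IsRRColor A ∧ k + 1 ∉ A := by
  rw [rr_iff, rr_iff]
  constructor
  · rintro ⟨h1, h2⟩
    simp only [mem_insert, not_or] at h1 h2
    exact ⟨⟨h1.2, fun a ha => (h2 a (Or.inr ha)).2⟩, (h2 k (Or.inl rfl)).2⟩
  · rintro ⟨⟨h1, h2⟩, h3⟩
    simp only [mem_insert, not_or]
    refine ⟨⟨by omega, h1⟩, ?_⟩
    rintro a (rfl | ha)
    · exact ⟨by omega, h3⟩
    · have := hA a ha
      exact ⟨by omega, h2 a ha⟩

lemma le_succ_of_notMem {k : ℕ} {A : Finset ℕ} (hA : ∀ a ∈ A, k ≤ a) (hk : k ∉ A) :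
    ∀ a ∈ A, k + 1 ≤ a := by
  intro a ha
  have := hA a ha
  have : a ≠ k := fun h => hk (h ▸ ha)
  omega

lemma F_eq (k : ℕ) (hk : 1 ≤ k) : F k = G k ∪ (fun p : Pr => (p.1, insert k p.2)) '' G (k+1) := by
  ext ⟨X, Y⟩
  constructor
  · intro hp
    by_cases hY : k ∈ Y
    · right
      obtain ⟨⟨hX1, hY1, hd⟩, hX2, hY2⟩ := hp
      simp only at hX1 hY1 hd hX2 hY2
      have hXk : k ∉ X := fun h => Finset.disjoint_left.1 hd h hY
      have hYe : insert k (Y.erase k) = Y := insert_erase hY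
      have hge := le_succ_of_notMem (k := k) (A := Y.erase k)
        (fun a ha => hY2 a (mem_of_mem_erase ha)) (by simp)
      rw [← hYe, rr_insert hk hge] at hY1
      refine ⟨(X, Y.erase k), ⟨⟨⟨hX1, hY1.1, hd.mono_right (erase_subset _ _)⟩,
        le_succ_of_notMem hX2 hXk, hge⟩, hY1.2⟩, ?_⟩
      simp [hYe]
    · exact Or.inl ⟨hp, hY⟩
  · rintro (hp | ⟨⟨A, C⟩, ⟨⟨⟨hA1, hC1, hd⟩, hA2, hC2⟩, hn⟩, he⟩)
    · exact hp.1
    · simp only [Prod.mk.injEq] at hA1 hC1 hd hA2 hC2 hn he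
      obtain ⟨rfl, rfl⟩ := he
      refine ⟨⟨hA1, (rr_insert hk hC2).2 ⟨hC1, hn⟩, ?_⟩, ?_, ?_⟩
      · rw [Finset.disjoint_insert_right]
        exact ⟨fun h => by have := hA2 k h; omega, hd⟩
      · intro a ha
        have := hA2 a ha
        omega
      · intro a ha
        rcases mem_insert.1 ha with rfl | ha
        · exact le_rfl
        · have := hC2 a ha
          omega

lemma G_eq (k : ℕ) (hk : 1 ≤ k) :
    G k = F (k+1) ∪ (fun p : Pr => (insert k p.1, p.2)) '' G' (k+1) := by
  ext ⟨X, Y⟩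
  constructor
  · rintro ⟨⟨⟨hX1, hY1, hd⟩, hX2, hY2⟩, hY⟩
    simp only at hX1 hY1 hd hX2 hY2 hY
    by_cases hX : k ∈ X
    · right
      have hXe : insert k (X.erase k) = X := insert_erase hX
      have hge := le_succ_of_notMem (k := k) (A := X.erase k)
        (fun a ha => hX2 a (mem_of_mem_erase ha)) (by simp)
      rw [← hXe, rr_insert hk hge] at hX1
      refine ⟨(X.erase k, Y), ⟨⟨⟨hX1.1, hY1, hd.mono_left (erase_subset _ _)⟩,
        hge, le_succ_of_notMem hY2 hY⟩, hX1.2⟩, ?_⟩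
      simp [hXe]
    · exact Or.inl ⟨⟨hX1, hY1, hd⟩, le_succ_of_notMem hX2 hX, le_succ_of_notMem hY2 hY⟩
  · rintro (⟨hp, hX2, hY2⟩ | ⟨⟨A, C⟩, ⟨⟨⟨hA1, hC1, hd⟩, hA2, hC2⟩, hn⟩, he⟩)
    · refine ⟨⟨hp, fun a ha => ?_, fun a ha => ?_⟩, fun h => ?_⟩
      · have := hX2 a ha; omega
      · have := hY2 a ha; omega
      · have := hY2 k h; omega
    · simp only [Prod.mk.injEq] at hA1 hC1 hd hA2 hC2 hn he
      obtain ⟨rfl, rfl⟩ := he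
      have hkC : k ∉ C := fun h => by have := hC2 k h; omega
      refine ⟨⟨⟨(rr_insert hk hA2).2 ⟨hA1, hn⟩, hC1, ?_⟩, ?_, ?_⟩, hkC⟩
      · rw [Finset.disjoint_insert_left]
        exact ⟨hkC, hd⟩
      · intro a ha
        rcases mem_insert.1 ha with rfl | ha
        · exact le_rfl
        · have := hA2 a ha
          omega
      · intro a ha
        have := hC2 a ha
        omega

lemma G'_eq (k : ℕ) : G' k = Prod.swap '' G k := by
  ext ⟨X, Y⟩
  constructor
  · rintro ⟨⟨⟨hX1, hY1, hd⟩, hX2, hY2⟩, hX⟩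
    exact ⟨(Y, X), ⟨⟨⟨hY1, hX1, hd.symm⟩, hY2, hX2⟩, hX⟩, rfl⟩
  · rintro ⟨⟨A, C⟩, ⟨⟨⟨hA1, hC1, hd⟩, hA2, hC2⟩, hn⟩, he⟩
    simp only [Prod.swap_prod_mk, Prod.mk.injEq] at he
    obtain ⟨rfl, rfl⟩ := he
    exact ⟨⟨⟨hC1, hA1, hd.symm⟩, hC2, hA2⟩, hn⟩

noncomputable def f (q : ℂ) (k : ℕ) : ℂ := ∑' p : F k, w q p
noncomputable def g (q : ℂ) (k : ℕ) : ℂ := ∑' p : G k, w q p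

lemma f_rec {q : ℂ} (hq : ‖q‖ < 1) (k : ℕ) (hk : 1 ≤ k) : f q k = g q k + q ^ k * g q (k+1) := by
  have hs := (w_summable hq).of_norm
  have hm : ∀ p ∈ G (k+1), k ∉ p.2 := by
    intro p hp h
    have := hp.1.2.2 k h
    omega
  rw [f, F_eq k hk, Summable.tsum_union_disjoint _ (hs.subtype _) (hs.subtype _), tsum_image]
  · rw [g, g, ← tsum_mul_left]
    congr 1
    refine tsum_congr fun p => ?_
    have := hm p p.2
    simp only [w]
    rw [sum_insert this]
    simp only [id, pow_add]; ring
  · intro p hp p' hp' he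
    simp only [Prod.mk.injEq] at he
    refine Prod.ext he.1 ?_
    rw [← erase_insert (hm p hp), he.2, erase_insert (hm p' hp')]
  · rw [Set.disjoint_left]
    rintro p hp ⟨p', hp', rfl⟩
    exact hp.2 (mem_insert_self _ _)

lemma g'_eq (q : ℂ) (k : ℕ) : ∑' p : G' k, w q p = g q k := by
  rw [G'_eq, tsum_image _ Prod.swap_injective.injOn, g]
  refine tsum_congr fun p => ?_
  simp [w, add_comm]

lemma g_rec {q : ℂ} (hq : ‖q‖ < 1) (k : ℕ) (hk : 1 ≤ k) :
    g q k = f q (k+1) + q ^ k * g q (k+1) := by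
  have hs := (w_summable hq).of_norm
  have hm : ∀ p ∈ G' (k+1), k ∉ p.1 := by
    intro p hp h
    have := hp.1.2.1 k h
    omega
  rw [g, G_eq k hk, Summable.tsum_union_disjoint _ (hs.subtype _) (hs.subtype _), tsum_image]
  · rw [f, ← g'_eq, ← tsum_mul_left]
    congr 1
    refine tsum_congr fun p => ?_
    have := hm p p.2
    simp only [w]
    rw [sum_insert this]
    simp only [id, pow_add]; ring
  · intro p hp p' hp' he
    simp only [Prod.mk.injEq] at he
    refine Prod.ext ?_ he.2
    rw [← erase_insert (hm p hp), he.1, erase_insert (hm p' hp')]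
  · rw [Set.disjoint_left]
    rintro p hp ⟨p', hp', rfl⟩
    have := hp.2.1 k (mem_insert_self _ _)
    omega

lemma g_tendsto {q : ℂ} (hq : ‖q‖ < 1) : Tendsto (g q) atTop (𝓝 1) := by
  classical
  have e : ∀ k, g q k = ∑' p : Pr, (G k).indicator (w q) p := fun k => tsum_subtype _ _
  have h1 : ∑' p : Pr, (if p = (∅, ∅) then (1:ℂ) else 0) = 1 := tsum_ite_eq _ _
  rw [← h1]
  refine Tendsto.congr (fun k => (e k).symm) ?_
  refine tendsto_tsum_of_dominated_convergence (w_summable hq) ?_ ?_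
  · intro p
    refine tendsto_const_nhds.congr' ?_
    split_ifs with hp
    · refine Eventually.of_forall fun k => ?_
      change 1 = (G k).indicator (w q) p
      rw [Set.indicator_of_mem]
      · simp [w, hp]
      · simp [hp, G, F, TwoColoredRR, IsRRColor]
    · filter_upwards [eventually_gt_atTop (p.1.sup id), eventually_gt_atTop (p.2.sup id)]
        with k h1 h2
      rw [Set.indicator_of_notMem]
      intro hpk
      apply hp
      refine Prod.ext ?_ ?_
      · refine eq_empty_of_forall_notMem fun a ha => ?_
        have := hpk.1.2.1 a ha
        have := le_sup (f := id) ha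
        simp only [id] at *
        omega
      · refine eq_empty_of_forall_notMem fun a ha => ?_
        have := hpk.1.2.2 a ha
        have := le_sup (f := id) ha
        simp only [id] at *
        omega
  · exact Eventually.of_forall fun k p => norm_indicator_le_norm_self _ _

def wt (p : G 1) : ℕ := p.1.1.sum id + p.1.2.sum id

lemma card_eq (n : ℕ) : R3count n = Nat.card {x : G 1 // wt x = n} := by
  unfold R3count
  refine Nat.card_congr ((Equiv.subtypeEquivRight fun p => ?_).trans
    (Equiv.subtypeSubtypeEquivSubtypeInter (fun p : Pr => p ∈ G 1)
      (fun p => p.1.sum id + p.2.sum id = n)).symm)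
  constructor
  · rintro ⟨h1, h2, h3⟩
    exact ⟨⟨⟨h1, h1.1.1, h1.2.1.1⟩, h2⟩, h3⟩
  · rintro ⟨⟨⟨h1, _⟩, h2⟩, h3⟩
    exact ⟨h1, h2, h3⟩

lemma fiber_sum {X : Type} (v : X → ℕ) (q : ℂ) (hs : Summable (fun x => q ^ v x)) :
    ∑' n : ℕ, (Nat.card {x // v x = n} : ℂ) * q ^ n = ∑' x, q ^ v x := by
  have h1 := hs.hasSum.tsum_fiberwise v
  rw [← h1.tsum_eq]
  refine tsum_congr fun n => ?_
  have h2 : ∀ x : v ⁻¹' {n}, q ^ v x = q ^ n := fun x => by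
    have : v x = n := x.2
    rw [this]
  rw [tsum_congr h2, tsum_const, nsmul_eq_mul]
  rfl

lemma lhs_eq {q : ℂ} (hq : ‖q‖ < 1) : ∑' n : ℕ, (R3count n : ℂ) * q ^ n = g q 1 := by
  have hs : Summable (fun p : G 1 => w q p) := (w_summable hq).of_norm.subtype _
  have h1 := fiber_sum wt q hs
  simp only [card_eq]
  exact h1

end RR

/-- `∑_{n≥0} R₃(n) qⁿ = (-q;q)_∞ (q;q⁴)_∞ (q³;q⁴)_∞ (q⁴;q⁴)_∞ / (q;q)_∞`. -/
theorem R3count_genfun (q : ℂ) (hq : ‖q‖ < 1) :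
    ∑' n : ℕ, (R3count n : ℂ) * q ^ n =
      qPochInf (-q) q * qPochInf q (q ^ 4) * qPochInf (q ^ 3) (q ^ 4) *
        qPochInf (q ^ 4) (q ^ 4) / qPochInf q q := by
  rw [RR.lhs_eq hq, RR.rhs_eq hq, ← RR.h_zero hq]
  have h := RR.unique hq (fun k => RR.g q (k+1) - RR.h q k) ?_ ?_
  · exact sub_eq_zero.1 h
  · have := ((RR.g_tendsto hq).comp (Filter.tendsto_add_atTop_nat 1)).sub (RR.h_tendsto hq)
    simpa using this
  · intro k
    have h1 := RR.h_rec hq k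
    have h2 := RR.g_rec hq (k+1) (by omega)
    have h3 := RR.f_rec hq (k+1+1) (by omega)
    linear_combination h2 + h3 - h1
end
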